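/- Let w, v ∈ ℝ^N and let B be a real N_p×N matrix. Suppose χ₁ ∈ [0,1] satisfies the energy constraint ‖(1-χ₁)·w + χ₁·v‖² ≤ ‖w‖², and χ₂ ∈ [0,1] satisfies the enstrophy constraint ‖B·((1-χ₂)·w + χ₂·v)‖² ≤ ‖B·w‖². Then χ = min(χ₁, χ₂) lies in [0,1] and simultaneously satisfies both constraints: ‖(1-χ)·w + χ·v‖² ≤ ‖w‖² and ‖B·((1-χ)·w + χ·v)‖² ≤ ‖B·w‖². -/

import Mathlib

theorem relax_mono_aux {E : Type*} [NormedAddCommGroup E] [NormedSpace ℝ E] (w v : E)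
    (a c : ℝ) (hc : 0 ≤ c) (hca : c ≤ a)
    (h : ‖(1 - a) • w + a • v‖ ^ 2 ≤ ‖w‖ ^ 2) :
    ‖(1 - c) • w + c • v‖ ^ 2 ≤ ‖w‖ ^ 2 := by
  rcases eq_or_lt_of_le (hc.trans hca) with h0 | h0
  · have : c = 0 := by linarith
    simp [this]
  have h' : ‖(1 - a) • w + a • v‖ ≤ ‖w‖ :=
    (sq_le_sq₀ (norm_nonneg _) (norm_nonneg _)).1 h
  obtain ⟨t, ht⟩ : ∃ t, t = c / a := ⟨_, rfl⟩
  have hc' : c = t * a := by rw [ht]; field_simp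
  have t0 : 0 ≤ t := by rw [ht]; positivity
  have t1 : t ≤ 1 := by rw [ht]; exact (div_le_one h0).2 hca
  have e : (1 - c) • w + c • v = (1 - t) • w + t • ((1 - a) • w + a • v) := by
    rw [hc']; module
  refine pow_le_pow_left₀ (norm_nonneg _) ?_ 2
  rw [e]
  refine (norm_add_le _ _).trans ?_
  rw [norm_smul, norm_smul, Real.norm_of_nonneg t0, Real.norm_of_nonneg (sub_nonneg.2 t1)]
  nlinarith [mul_le_mul_of_nonneg_left h' t0]

/-- If `χ₁ ∈ [0,1]` satisfies the energy constraint and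
`χ₂ ∈ [0,1]` satisfies the enstrophy constraint, then `χ = min χ₁ χ₂` lies in
`[0,1]` and simultaneously satisfies both constraints. -/
theorem min_relaxation_satisfies_both_constraints {N Np : ℕ}
    (w v : EuclideanSpace ℝ (Fin N)) (B : Matrix (Fin Np) (Fin N) ℝ)
    (χ₁ χ₂ : ℝ) (h₁0 : 0 ≤ χ₁) (h₁1 : χ₁ ≤ 1) (h₂0 : 0 ≤ χ₂) (h₂1 : χ₂ ≤ 1)
    (hE : ‖(1 - χ₁) • w + χ₁ • v‖ ^ 2 ≤ ‖w‖ ^ 2)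
    (hZ : ‖Matrix.toEuclideanLin B ((1 - χ₂) • w + χ₂ • v)‖ ^ 2 ≤
      ‖Matrix.toEuclideanLin B w‖ ^ 2) :
    (0 ≤ min χ₁ χ₂ ∧ min χ₁ χ₂ ≤ 1) ∧
      ‖(1 - min χ₁ χ₂) • w + min χ₁ χ₂ • v‖ ^ 2 ≤ ‖w‖ ^ 2 ∧
      ‖Matrix.toEuclideanLin B ((1 - min χ₁ χ₂) • w + min χ₁ χ₂ • v)‖ ^ 2 ≤
        ‖Matrix.toEuclideanLin B w‖ ^ 2 := by
  refine ⟨⟨le_min h₁0 h₂0, (min_le_left _ _).trans h₁1⟩, ?_, ?_⟩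
  · exact relax_mono_aux w v χ₁ _ (le_min h₁0 h₂0) (min_le_left _ _) hE
  · rw [map_add, map_smul, map_smul] at hZ ⊢
    exact relax_mono_aux _ _ χ₂ _ (le_min h₁0 h₂0) (min_le_right _ _) hZ
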